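/- Let N ≥ 1 and let A ∈ ℝ^{N×N} be a symmetric tridiagonal matrix with A_{1,1} = 1, A_{i,i} = 2 for i = 2, …, N, |A_{i,i+1}| ≤ 1 for i = 1, …, N−1, and A_{i,j} = 0 for |i − j| ≥ 2. Then the determinant of every leading principal k×k submatrix A^{(k)} of A satisfies det A^{(k)} ≥ det A^{(k−1)} ≥ 1 for 2 ≤ k ≤ N; in particular det A ≥ 1 and A is invertible. -/

import Mathlib

/-!
Expanding along the last row and then the last column, the leading principal minors `D k` of a
tridiagonal matrix satisfy `D (k + 2) = a * D (k + 1) - b * c * D k`, where `a` is the new diagonal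
entry and `b`, `c` are the two entries coupling it to the preceding block. If `1 ≤ a` and
`b * c ≤ a - 1`, then `0 ≤ D k ≤ D (k + 1)` implies
`b * c * D k ≤ (a - 1) * D k ≤ (a - 1) * D (k + 1)`, that is, `D (k + 1) ≤ D (k + 2)`. The minors
therefore increase from `D 0 = 1`.
-/

section Definitions

variable {R : Type*} {N k : ℕ}

/-- Tridiagonal matrices: the entries off the diagonal and the two adjacent diagonals vanish.
The two inequalities say `2 ≤ |i - j|` without truncated subtraction. -/
def IsTridiagonal [Zero R] (A : Matrix (Fin N) (Fin N) R) : Prop :=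
  ∀ i j : Fin N, ((i : ℕ) + 2 ≤ (j : ℕ) ∨ (j : ℕ) + 2 ≤ (i : ℕ)) → A i j = 0

/-- The leading principal submatrix `A^{(k)}`, the upper-left `k × k` block of `A`; the empty
block `k = 0` is allowed. -/
def leadingPrincipalSubmatrix (A : Matrix (Fin N) (Fin N) R) (hk : k ≤ N) :
    Matrix (Fin k) (Fin k) R :=
  A.submatrix (Fin.castLE hk) (Fin.castLE hk)

end Definitions

section Expansion

variable {R : Type*} [CommRing R] {n : ℕ}

theorem det_eq_mul_det_of_last_col_eq_zero (M : Matrix (Fin (n + 1)) (Fin (n + 1)) R)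
    (hcol : ∀ i : Fin n, M i.castSucc (Fin.last n) = 0) :
    M.det = M (Fin.last n) (Fin.last n) * (M.submatrix Fin.castSucc Fin.castSucc).det := by
  rw [Matrix.det_succ_column M (Fin.last n), Fin.sum_univ_castSucc]
  simp only [hcol, mul_zero, zero_mul, Finset.sum_const_zero, zero_add, Fin.succAbove_last,
    Fin.val_last, Even.neg_one_pow ⟨n, rfl⟩, one_mul]

theorem det_eq_sub_of_last_row_eq_zero (M : Matrix (Fin (n + 2)) (Fin (n + 2)) R)
    (hrow : ∀ j : Fin n, M (Fin.last (n + 1)) j.castSucc.castSucc = 0) :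
    M.det =
      M (Fin.last (n + 1)) (Fin.last (n + 1)) * (M.submatrix Fin.castSucc Fin.castSucc).det -
        M (Fin.last (n + 1)) (Fin.last n).castSucc *
          (M.submatrix Fin.castSucc (Fin.last n).castSucc.succAbove).det := by
  have hodd : (-1 : R) ^ (n + 1 + n) = -1 := Odd.neg_one_pow ⟨n, by ring⟩
  have heven : (-1 : R) ^ (n + 1 + (n + 1)) = 1 := Even.neg_one_pow ⟨n + 1, rfl⟩
  rw [Matrix.det_succ_row M (Fin.last (n + 1)), Fin.sum_univ_castSucc, Fin.sum_univ_castSucc]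
  simp only [hrow, mul_zero, zero_mul, Finset.sum_const_zero, zero_add, Fin.succAbove_last,
    Fin.val_last, Fin.val_castSucc, hodd, heven]
  ring

theorem det_eq_sub_of_last_row_col_eq_zero (M : Matrix (Fin (n + 2)) (Fin (n + 2)) R)
    (hrow : ∀ j : Fin n, M (Fin.last (n + 1)) j.castSucc.castSucc = 0)
    (hcol : ∀ i : Fin n, M i.castSucc.castSucc (Fin.last (n + 1)) = 0) :
    M.det =
      M (Fin.last (n + 1)) (Fin.last (n + 1)) * (M.submatrix Fin.castSucc Fin.castSucc).det -
        M (Fin.last n).castSucc (Fin.last (n + 1)) * M (Fin.last (n + 1)) (Fin.last n).castSucc *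
          ((M.submatrix Fin.castSucc Fin.castSucc).submatrix Fin.castSucc Fin.castSucc).det := by
  have hlast : (Fin.last n).castSucc.succAbove (Fin.last n) = Fin.last (n + 1) := by
    rw [Fin.succAbove_castSucc_self, Fin.succ_last]
  have hinit (j : Fin n) :
      (Fin.last n).castSucc.succAbove j.castSucc = j.castSucc.castSucc :=
    Fin.succAbove_of_castSucc_lt _ _ (Fin.castSucc_lt_castSucc_iff.2 (Fin.castSucc_lt_last j))
  have hminor := det_eq_mul_det_of_last_col_eq_zero
    (M.submatrix Fin.castSucc (Fin.last n).castSucc.succAbove)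
    (fun i => by rw [Matrix.submatrix_apply, hlast, hcol])
  simp only [Matrix.submatrix_apply, Matrix.submatrix_submatrix, Function.comp_def, hlast, hinit]
    at hminor
  rw [det_eq_sub_of_last_row_eq_zero M hrow, hminor, Matrix.submatrix_submatrix]
  simp only [Function.comp_def]
  ring

end Expansion

theorem le_mul_sub_mul {R : Type*} [Ring R] [PartialOrder R] [IsOrderedRing R] {x y a b : R}
    (hx : 0 ≤ x) (hxy : x ≤ y) (ha : 1 ≤ a) (hb : b ≤ a - 1) : y ≤ a * y - b * x := by
  have hbx : b * x ≤ (a - 1) * y := calc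
    b * x ≤ (a - 1) * x := mul_le_mul_of_nonneg_right hb hx
    _ ≤ (a - 1) * y := mul_le_mul_of_nonneg_left hxy (sub_nonneg.2 ha)
  calc
    y = a * y - (a - 1) * y := by noncomm_ring
    _ ≤ a * y - b * x := sub_le_sub_left hbx _

namespace IsTridiagonal

section Recurrence

variable {R : Type*} [CommRing R] {N k : ℕ} {A : Matrix (Fin N) (Fin N) R}

theorem det_leadingPrincipalSubmatrix_add_two (hA : IsTridiagonal A) (hk : k + 2 ≤ N) :
    (leadingPrincipalSubmatrix A hk).det =
      A ⟨k + 1, hk⟩ ⟨k + 1, hk⟩ *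
          (leadingPrincipalSubmatrix A (Nat.le_of_succ_le hk)).det -
        A ⟨k, Nat.lt_of_succ_lt hk⟩ ⟨k + 1, hk⟩ * A ⟨k + 1, hk⟩ ⟨k, Nat.lt_of_succ_lt hk⟩ *
          (leadingPrincipalSubmatrix A (Nat.le_of_add_right_le hk)).det :=
  det_eq_sub_of_last_row_col_eq_zero (leadingPrincipalSubmatrix A hk)
    (fun _ => hA _ _ (Or.inr (by simp))) (fun _ => hA _ _ (Or.inl (by simp)))

end Recurrence

section Monotonicity

variable {R : Type*} [CommRing R] [PartialOrder R] [IsOrderedRing R] {N k l : ℕ}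
  {A : Matrix (Fin N) (Fin N) R}

theorem one_le_det_and_det_le_det_succ (hA : IsTridiagonal A) (hdiag : ∀ i, 1 ≤ A i i)
    (hoff : ∀ i j : Fin N, (j : ℕ) = (i : ℕ) + 1 → A i j * A j i ≤ A j j - 1) (hk : k + 1 ≤ N) :
    1 ≤ (leadingPrincipalSubmatrix A (Nat.le_of_succ_le hk)).det ∧
      (leadingPrincipalSubmatrix A (Nat.le_of_succ_le hk)).det ≤
        (leadingPrincipalSubmatrix A hk).det := by
  induction k with
  | zero => simp [leadingPrincipalSubmatrix, hdiag]
  | succ k ih =>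
    obtain ⟨hone, hle⟩ := ih (Nat.le_of_succ_le hk)
    refine ⟨hone.trans hle, ?_⟩
    rw [hA.det_leadingPrincipalSubmatrix_add_two hk]
    exact le_mul_sub_mul (zero_le_one.trans hone) hle (hdiag _) (hoff _ _ rfl)

theorem det_leadingPrincipalSubmatrix_mono (hA : IsTridiagonal A) (hdiag : ∀ i, 1 ≤ A i i)
    (hoff : ∀ i j : Fin N, (j : ℕ) = (i : ℕ) + 1 → A i j * A j i ≤ A j j - 1)
    (hkl : k ≤ l) (hl : l ≤ N) :
    (leadingPrincipalSubmatrix A (hkl.trans hl)).det ≤ (leadingPrincipalSubmatrix A hl).det := by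
  induction l, hkl using Nat.le_induction with
  | base => exact le_rfl
  | succ l _ ih =>
    exact (ih (Nat.le_of_succ_le hl)).trans (hA.one_le_det_and_det_le_det_succ hdiag hoff hl).2

theorem one_le_det_leadingPrincipalSubmatrix (hA : IsTridiagonal A) (hdiag : ∀ i, 1 ≤ A i i)
    (hoff : ∀ i j : Fin N, (j : ℕ) = (i : ℕ) + 1 → A i j * A j i ≤ A j j - 1) (hk : k ≤ N) :
    1 ≤ (leadingPrincipalSubmatrix A hk).det :=
  Matrix.det_fin_zero.ge.trans (hA.det_leadingPrincipalSubmatrix_mono hdiag hoff k.zero_le hk)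

end Monotonicity

end IsTridiagonal

theorem stmt_5_general {K : Type*} [Field K] [PartialOrder K] [IsOrderedRing K] {N : ℕ}
    {A : Matrix (Fin N) (Fin N) K} (hA : IsTridiagonal A) (hdiag : ∀ i, 1 ≤ A i i)
    (hoff : ∀ i j : Fin N, (j : ℕ) = (i : ℕ) + 1 → A i j * A j i ≤ A j j - 1) :
    (∀ (k l : ℕ) (hkl : k ≤ l) (hl : l ≤ N),
      (leadingPrincipalSubmatrix A (hkl.trans hl)).det ≤ (leadingPrincipalSubmatrix A hl).det ∧
        1 ≤ (leadingPrincipalSubmatrix A (hkl.trans hl)).det) ∧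
      1 ≤ A.det ∧ IsUnit A.det := by
  have hdet : 1 ≤ A.det := hA.one_le_det_leadingPrincipalSubmatrix hdiag hoff le_rfl
  exact ⟨fun k l hkl hl => ⟨hA.det_leadingPrincipalSubmatrix_mono hdiag hoff hkl hl,
    hA.one_le_det_leadingPrincipalSubmatrix hdiag hoff (hkl.trans hl)⟩,
    hdet, (zero_lt_one.trans_le hdet).ne'.isUnit⟩

theorem apply_mul_apply_swap_le_one {ι R : Type*} [CommRing R] [LinearOrder R]
    [IsStrictOrderedRing R] {A : Matrix ι ι R} (hA : A.IsSymm) {i j : ι} (hij : |A i j| ≤ 1) :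
    A i j * A j i ≤ 1 := by
  rw [hA.apply i j, ← sq]
  exact (sq_le_one_iff_abs_le_one _).2 hij

/-- Let `A ∈ ℝ^{N×N}` be symmetric tridiagonal with `A_{1,1} = 1`, `A_{i,i} = 2`
for `i ≥ 2`, `|A_{i,i+1}| ≤ 1`, and `A_{i,j} = 0` for `|i - j| ≥ 2`. Then the determinants of
the leading principal submatrices `A^{(k)}` satisfy `det A^{(k)} ≥ det A^{(k-1)} ≥ 1` for
`2 ≤ k ≤ N`; in particular `det A ≥ 1` and `A` is invertible. (Fin index `i` corresponds to
math index `i+1`.) -/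
theorem stmt_5 (N : ℕ) (hN : 1 ≤ N) (A : Matrix (Fin N) (Fin N) ℝ)
    (hsymm : A.IsSymm)
    (h11 : ∀ i : Fin N, (i : ℕ) = 0 → A i i = 1)
    (hdiag : ∀ i : Fin N, (i : ℕ) ≠ 0 → A i i = 2)
    (hoff : ∀ i j : Fin N, (j : ℕ) = (i : ℕ) + 1 → |A i j| ≤ 1)
    (hzero : ∀ i j : Fin N, ((i : ℕ) + 2 ≤ (j : ℕ) ∨ (j : ℕ) + 2 ≤ (i : ℕ)) → A i j = 0) :
    (∀ (k : ℕ) (_ : 2 ≤ k) (hk : k ≤ N),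
      (A.submatrix (Fin.castLE (le_trans (Nat.sub_le k 1) hk))
          (Fin.castLE (le_trans (Nat.sub_le k 1) hk))).det
        ≤ (A.submatrix (Fin.castLE hk) (Fin.castLE hk)).det ∧
      1 ≤ (A.submatrix (Fin.castLE (le_trans (Nat.sub_le k 1) hk))
          (Fin.castLE (le_trans (Nat.sub_le k 1) hk))).det) ∧
    1 ≤ A.det ∧ IsUnit A.det := by
  have hone (i : Fin N) : 1 ≤ A i i := by
    by_cases hi : (i : ℕ) = 0
    · exact (h11 i hi).ge
    · exact one_le_two.trans_eq (hdiag i hi).symm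
  have hprod (i j : Fin N) (hij : (j : ℕ) = (i : ℕ) + 1) : A i j * A j i ≤ A j j - 1 := by
    linarith [apply_mul_apply_swap_le_one hsymm (hoff i j hij), hdiag j (by omega)]
  exact (stmt_5_general hzero hone hprod).imp_left fun h k _ hk => h (k - 1) k (Nat.sub_le k 1) hk
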